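/- (Generalized Chasles theorem.) Let A = diag(a₁,…,aₙ) and let X(t), P(t) be differentiable curves of n×r real matrices satisfying for all t the Stiefel constraints XᵀX = I_r, XᵀP + PᵀX = 0, and the Neumann system with the Euclidean metric: Ẋ = P, Ṗ = −AX − XPᵀP + XXᵀAX. Fix c ∈ ℝ with cI_n − A invertible, and let 𝒱(t) be the (n+r)×2r matrix whose block form is [[X(t), P(t)],[0, I_r]], and B(c) the (n+r)×(n+r) diagonal matrix diag(1/(c−a₁),…,1/(c−aₙ),1,…,1). If at some time t₀ the 2r-plane spanned by the columns of 𝒱(t₀) is tangent to the cone {w ∈ ℝ^{n+r} : wᵀB(c)w = 0} — i.e. there exists a nonzero vector v in the column space of 𝒱(t₀) with vᵀB(c)w = 0 for all w in the column space of 𝒱(t₀) — then the same tangency holds at every time t. -/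

import Mathlib

/-!
Put `G = 𝒱ᵀ B 𝒱`, with `𝒱 = [[X, P], [0, 1]]` and `B = diag((c - A)⁻¹, 1)`. Since `𝒱` has full
column rank, its column space is tangent to the cone `wᵀ B w = 0` exactly when `det G = 0`. The
Neumann equation can be written `Ṗ = (c - A) X + X S` with `S = XᵀAX - PᵀP - c`, and this gives
`B 𝒱̇ = B 𝒱 Z + C`, where `Z = [[0, S], [1, 0]]` is traceless and `𝒱ᵀ C` is skew by the Stiefel
constraint. Hence `Ġ = Zᵀ G + G Z`, so by Jacobi's formula `det G` is a first integral.
-/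

open Matrix

section MatrixDerivatives

variable {𝕜 : Type*} [NontriviallyNormedField 𝕜] {l m n o : Type*} {t : 𝕜}

theorem hasDerivAt_matrix_iff [Finite m] [Finite n] {F : 𝕜 → Matrix m n 𝕜}
    {F' : Matrix m n 𝕜} :
    HasDerivAt F F' t ↔ ∀ i j, HasDerivAt (fun s => F s i j) (F' i j) t := by
  have := Fintype.ofFinite m
  have := Fintype.ofFinite n
  exact hasDerivAt_pi.trans (forall_congr' fun _ => hasDerivAt_pi)

theorem hasDerivAt_matrix_const [Finite m] [Finite n] (t : 𝕜) (M : Matrix m n 𝕜) :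
    HasDerivAt (fun _ => M) 0 t :=
  hasDerivAt_matrix_iff.2 fun i j => hasDerivAt_const t (M i j)

theorem hasDerivAt_matrix_transpose [Finite m] [Finite n] {F : 𝕜 → Matrix m n 𝕜}
    {F' : Matrix m n 𝕜} (hF : HasDerivAt F F' t) : HasDerivAt (fun s => (F s)ᵀ) F'ᵀ t :=
  hasDerivAt_matrix_iff.2 fun i j => hasDerivAt_matrix_iff.1 hF j i

theorem hasDerivAt_matrix_mul [Finite l] [Fintype m] [Finite n] {F : 𝕜 → Matrix l m 𝕜}
    {G : 𝕜 → Matrix m n 𝕜} {F' : Matrix l m 𝕜} {G' : Matrix m n 𝕜} (hF : HasDerivAt F F' t)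
    (hG : HasDerivAt G G' t) :
    HasDerivAt (fun s => F s * G s) (F' * G t + F t * G') t := by
  rw [hasDerivAt_matrix_iff] at hF hG ⊢
  intro i j
  simp only [mul_apply, Matrix.add_apply, ← Finset.sum_add_distrib]
  exact HasDerivAt.fun_sum fun k _ => (hF i k).mul (hG k j)

theorem hasDerivAt_matrix_fromBlocks [Finite l] [Finite m] [Finite n] [Finite o]
    {F₁₁ : 𝕜 → Matrix l n 𝕜} {F₁₂ : 𝕜 → Matrix l o 𝕜}
    {F₂₁ : 𝕜 → Matrix m n 𝕜} {F₂₂ : 𝕜 → Matrix m o 𝕜} {F₁₁' : Matrix l n 𝕜}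
    {F₁₂' : Matrix l o 𝕜} {F₂₁' : Matrix m n 𝕜} {F₂₂' : Matrix m o 𝕜}
    (h₁₁ : HasDerivAt F₁₁ F₁₁' t) (h₁₂ : HasDerivAt F₁₂ F₁₂' t)
    (h₂₁ : HasDerivAt F₂₁ F₂₁' t) (h₂₂ : HasDerivAt F₂₂ F₂₂' t) :
    HasDerivAt (fun s => fromBlocks (F₁₁ s) (F₁₂ s) (F₂₁ s) (F₂₂ s))
      (fromBlocks F₁₁' F₁₂' F₂₁' F₂₂') t := by
  rw [hasDerivAt_matrix_iff] at h₁₁ h₁₂ h₂₁ h₂₂ ⊢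
  rintro (i | i) (j | j)
  exacts [h₁₁ i j, h₁₂ i j, h₂₁ i j, h₂₂ i j]

theorem hasDerivAt_gram [Fintype m] [Finite n] {V : 𝕜 → Matrix m n 𝕜} {V' : Matrix m n 𝕜}
    (B : Matrix m m 𝕜) (hV : HasDerivAt V V' t) :
    HasDerivAt (fun s => (V s)ᵀ * B * V s) (V'ᵀ * B * V t + (V t)ᵀ * B * V') t := by
  simpa only [Matrix.mul_zero, add_zero] using
    hasDerivAt_matrix_mul
      (hasDerivAt_matrix_mul (hasDerivAt_matrix_transpose hV) (hasDerivAt_matrix_const t B)) hV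

end MatrixDerivatives

section Jacobi

variable {n : Type*} [Fintype n] [DecidableEq n]

theorem det_updateRow_eq_mul_adjugate_apply {R : Type*} [CommRing R] (M N : Matrix n n R)
    (i : n) : (M.updateRow i (N i)).det = (N * M.adjugate) i i := by
  rw [← cramer_transpose_apply, cramer_eq_adjugate_mulVec, ← adjugate_transpose,
    mulVec_transpose]
  rfl

theorem trace_mul_add_mul_mul_adjugate {R : Type*} [CommRing R] (Y Z M : Matrix n n R) :
    ((Y * M + M * Z) * M.adjugate).trace = (Y.trace + Z.trace) * M.det := by
  have hY : (Y * M * M.adjugate).trace = Y.trace * M.det := by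
    rw [Matrix.mul_assoc, mul_adjugate, Matrix.mul_smul, Matrix.mul_one,
      trace_smul, smul_eq_mul, mul_comm]
  have hZ : (M * Z * M.adjugate).trace = Z.trace * M.det := by
    rw [trace_mul_cycle, adjugate_mul, Matrix.smul_mul, Matrix.one_mul,
      trace_smul, smul_eq_mul, mul_comm]
  rw [Matrix.add_mul, trace_add, hY, hZ, add_mul]

variable {𝕜 : Type*} [NontriviallyNormedField 𝕜] {G : 𝕜 → Matrix n n 𝕜} {t : 𝕜}

theorem hasDerivAt_det {G' : Matrix n n 𝕜} (hG : HasDerivAt G G' t) :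
    HasDerivAt (fun s => (G s).det) (G' * (G t).adjugate).trace t := by
  let detRows : ContinuousMultilinearMap 𝕜 (fun _ : n => n → 𝕜) 𝕜 :=
    ⟨detRowAlternating.toMultilinearMap, continuous_id.matrix_det⟩
  have hdet : detRows.linearDeriv (G t) G' = (G' * (G t).adjugate).trace :=
    (detRows.linearDeriv_apply (G t) G').trans <|
      Finset.sum_congr rfl fun i _ => det_updateRow_eq_mul_adjugate_apply (G t) G' i
  exact ((detRows.hasFDerivAt (G t)).comp_hasDerivAt t hG).congr_deriv hdet

theorem hasDerivAt_det_of_mul_add_mul {Y Z : Matrix n n 𝕜}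
    (hG : HasDerivAt G (Y * G t + G t * Z) t) :
    HasDerivAt (fun s => (G s).det) ((Y.trace + Z.trace) * (G t).det) t :=
  trace_mul_add_mul_mul_adjugate Y Z (G t) ▸ hasDerivAt_det hG

end Jacobi

section Tangency

variable {R : Type*} [CommRing R] {m n : Type*} [Fintype m] [Fintype n]

/-- The column space of `V` is tangent to the cone `wᵀ B w = 0`: it contains a nonzero vector of
the (left) radical of the restriction of `B` to it. -/
def IsTangentToCone (V : Matrix m n R) (B : Matrix m m R) : Prop :=
  ∃ v : m → R, v ≠ 0 ∧ (∃ u : n → R, v = V *ᵥ u) ∧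
    ∀ w : m → R, (∃ d : n → R, w = V *ᵥ d) → v ⬝ᵥ (B *ᵥ w) = 0

theorem mulVec_dotProduct_mulVec_mulVec (V : Matrix m n R) (B : Matrix m m R) (u d : n → R) :
    (V *ᵥ u) ⬝ᵥ (B *ᵥ (V *ᵥ d)) = (u ᵥ* (Vᵀ * B * V)) ⬝ᵥ d := by
  rw [mulVec_mulVec, dotProduct_mulVec, ← vecMul_transpose, vecMul_vecMul, Matrix.mul_assoc]

theorem isTangentToCone_iff_det_eq_zero [IsDomain R] [DecidableEq n] {V : Matrix m n R}
    (hV : Function.Injective V.mulVec) (B : Matrix m m R) :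
    IsTangentToCone V B ↔ (Vᵀ * B * V).det = 0 := by
  rw [← exists_vecMul_eq_zero_iff]
  constructor
  · rintro ⟨_, hv, ⟨u, rfl⟩, hrad⟩
    refine ⟨u, fun hu => hv (by rw [hu, mulVec_zero]), dotProduct_eq_zero _ fun d => ?_⟩
    rw [← mulVec_dotProduct_mulVec_mulVec]
    exact hrad _ ⟨d, rfl⟩
  · rintro ⟨u, hu, hker⟩
    refine ⟨V *ᵥ u, fun h => hu (hV (h.trans (mulVec_zero V).symm)), ⟨u, rfl⟩, ?_⟩
    rintro _ ⟨d, rfl⟩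
    rw [mulVec_dotProduct_mulVec_mulVec, hker, zero_dotProduct]

end Tangency

section StiefelAlgebra

variable {R : Type*} [CommRing R] {n r : Type*}

/-- The matrix `𝒱(X, P)`, whose columns span the plane attached to the point `(X, P)` of the
cotangent bundle of the Stiefel variety. -/
def stiefelFrame [DecidableEq r] (X P : Matrix n r R) : Matrix (n ⊕ r) (r ⊕ r) R :=
  fromBlocks X P 0 1

/-- The right-hand side `Ṗ` of the Neumann system with the Euclidean metric. -/
def neumannForce [Fintype n] [Fintype r] (A : Matrix n n R) (X P : Matrix n r R) : Matrix n r R :=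
  -(A * X) - X * Pᵀ * P + X * Xᵀ * A * X

/-- The derivative of `𝒱(X, P)` along the Neumann system. -/
def stiefelFrameVelocity [Fintype n] [Fintype r] (A : Matrix n n R) (X P : Matrix n r R) :
    Matrix (n ⊕ r) (r ⊕ r) R :=
  fromBlocks P (neumannForce A X P) 0 0

variable [DecidableEq r]

/-- The matrix `C = B 𝒱̇ - B 𝒱 Z`, which does not contribute to the derivative of the Gram matrix
because `𝒱ᵀ C` is skew. -/
def frameDefect (X : Matrix n r R) : Matrix (n ⊕ r) (r ⊕ r) R :=
  fromBlocks 0 X (-1) 0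

variable [Fintype n]

/-- The matrix `S` with `Ṗ = (c - A) X + X S`: the Lagrange multiplier of the constraint
`Xᵀ X = 1`, shifted by `c`. -/
def shiftedMultiplier (A : Matrix n n R) (c : R) (X P : Matrix n r R) : Matrix r r R :=
  Xᵀ * A * X - Pᵀ * P - c • 1

/-- The traceless generator `Z` of the evolution `Ġ = Zᵀ G + G Z` of the Gram matrix `G` of the
frame. -/
def gramGenerator (A : Matrix n n R) (c : R) (X P : Matrix n r R) :
    Matrix (r ⊕ r) (r ⊕ r) R :=
  fromBlocks 0 (shiftedMultiplier A c X P) 1 0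

/-- The quadratic form of the cone `Q̄(c)` of the confocal family, for an arbitrary matrix `A` in
place of `diag(a₁, …, aₙ)`. The inverse has the junk value `0` when `c - A` is not invertible. -/
noncomputable def confocalForm [DecidableEq n] (r : Type*) [DecidableEq r] (A : Matrix n n R)
    (c : R) : Matrix (n ⊕ r) (n ⊕ r) R :=
  fromBlocks (c • 1 - A)⁻¹ 0 0 1

theorem isSymm_confocalForm [DecidableEq n] {A : Matrix n n R} (hA : A.IsSymm) (c : R) :
    (confocalForm r A c).IsSymm :=
  .fromBlocks ((isSymm_one.smul c).sub hA).inv transpose_zero isSymm_one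

theorem confocalForm_diagonal [DecidableEq n] {K : Type*} [Field K] {a : n → K} {c : K}
    (hc : IsUnit (c • 1 - diagonal a)) :
    confocalForm r (diagonal a) c =
      diagonal (Sum.elim (fun i => 1 / (c - a i)) fun _ => 1) := by
  have hsub : c • 1 - diagonal a = diagonal fun i => c - a i := by
    rw [smul_one_eq_diagonal, diagonal_sub]
  have hne : ∀ i, c - a i ≠ 0 := fun i =>
    (Pi.isUnit_iff.1 (isUnit_diagonal.1 (hsub ▸ hc)) i).ne_zero
  have hinv : (c • 1 - diagonal a)⁻¹ = diagonal fun i => 1 / (c - a i) := by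
    refine inv_eq_right_inv ?_
    rw [hsub, diagonal_mul_diagonal, ← diagonal_one]
    exact congrArg diagonal (funext fun i => mul_one_div_cancel (hne i))
  rw [confocalForm, hinv, ← diagonal_one, fromBlocks_diagonal]

variable [Fintype r]

theorem trace_gramGenerator (A : Matrix n n R) (c : R) (X P : Matrix n r R) :
    (gramGenerator A c X P).trace = 0 := by
  simp [gramGenerator, trace]

theorem stiefelFrame_mulVec_injective {X : Matrix n r R} (hX : Xᵀ * X = 1) (P : Matrix n r R) :
    Function.Injective (stiefelFrame X P).mulVec := by
  let L : Matrix (r ⊕ r) (n ⊕ r) R := fromBlocks Xᵀ (-(Xᵀ * P)) 0 1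
  have hL : L * stiefelFrame X P = 1 := by
    simp [L, stiefelFrame, fromBlocks_multiply, hX]
  exact Function.LeftInverse.injective (g := L.mulVec) fun u => by
    rw [mulVec_mulVec, hL, one_mulVec]

theorem stiefelFrame_transpose_mul_frameDefect_add_transpose {X P : Matrix n r R}
    (hX : Xᵀ * X = 1) (hXP : Xᵀ * P + Pᵀ * X = 0) :
    (stiefelFrame X P)ᵀ * frameDefect X + ((stiefelFrame X P)ᵀ * frameDefect X)ᵀ = 0 := by
  have hPX : Pᵀ * X + Xᵀ * P = 0 := by rw [add_comm, hXP]
  simp [stiefelFrame, frameDefect, fromBlocks_transpose, fromBlocks_multiply, fromBlocks_add,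
    hX, hPX]

variable [DecidableEq n]

theorem neumannForce_eq_sub_mul_add_mul (A : Matrix n n R) (c : R) (X P : Matrix n r R) :
    neumannForce A X P = (c • 1 - A) * X + X * shiftedMultiplier A c X P := by
  simp only [neumannForce, shiftedMultiplier, Matrix.sub_mul, Matrix.mul_sub, Matrix.smul_mul,
    Matrix.mul_smul, Matrix.one_mul, Matrix.mul_one, Matrix.mul_assoc]
  abel

theorem confocalForm_mul_stiefelFrameVelocity {A : Matrix n n R} {c : R}
    (hc : IsUnit (c • 1 - A)) (X P : Matrix n r R) :
    confocalForm r A c * stiefelFrameVelocity A X P =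
      confocalForm r A c * stiefelFrame X P * gramGenerator A c X P + frameDefect X := by
  have hinv : (c • 1 - A)⁻¹ * (c • 1 - A) = 1 :=
    nonsing_inv_mul _ ((isUnit_iff_isUnit_det _).1 hc)
  have hforce : (c • 1 - A)⁻¹ * neumannForce A X P =
      (c • 1 - A)⁻¹ * X * shiftedMultiplier A c X P + X := by
    rw [neumannForce_eq_sub_mul_add_mul A c, Matrix.mul_add, ← Matrix.mul_assoc, hinv,
      Matrix.one_mul, ← Matrix.mul_assoc, add_comm]
  simp [confocalForm, stiefelFrame, stiefelFrameVelocity, gramGenerator, frameDefect,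
    fromBlocks_multiply, fromBlocks_add, hforce]

theorem gram_velocity_eq {A : Matrix n n R} (hA : A.IsSymm) {c : R} (hc : IsUnit (c • 1 - A))
    {X P : Matrix n r R} (hX : Xᵀ * X = 1) (hXP : Xᵀ * P + Pᵀ * X = 0) :
    (stiefelFrameVelocity A X P)ᵀ * confocalForm r A c * stiefelFrame X P +
        (stiefelFrame X P)ᵀ * confocalForm r A c * stiefelFrameVelocity A X P =
      (gramGenerator A c X P)ᵀ * ((stiefelFrame X P)ᵀ * confocalForm r A c * stiefelFrame X P) +
        ((stiefelFrame X P)ᵀ * confocalForm r A c * stiefelFrame X P) *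
          gramGenerator A c X P := by
  set B := confocalForm r A c with hB
  set V := stiefelFrame X P with hV
  set W := stiefelFrameVelocity A X P with hW
  set Z := gramGenerator A c X P with hZ
  set K := Vᵀ * frameDefect X with hK
  have hB_symm : Bᵀ = B := isSymm_confocalForm hA c
  have hK_skew : K + Kᵀ = 0 := stiefelFrame_transpose_mul_frameDefect_add_transpose hX hXP
  have hVW : Vᵀ * B * W = Vᵀ * B * V * Z + K := by
    rw [Matrix.mul_assoc, hB, hW, confocalForm_mul_stiefelFrameVelocity hc, ← hB, ← hV, ← hZ,
      Matrix.mul_add, ← hK]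
    simp only [Matrix.mul_assoc]
  have hWV : Wᵀ * B * V = Zᵀ * (Vᵀ * B * V) + Kᵀ := by
    simpa only [transpose_mul, transpose_add, transpose_transpose, hB_symm, Matrix.mul_assoc] using
      congrArg transpose hVW
  calc Wᵀ * B * V + Vᵀ * B * W
      = Zᵀ * (Vᵀ * B * V) + Vᵀ * B * V * Z + (K + Kᵀ) := by rw [hVW, hWV]; abel
    _ = Zᵀ * (Vᵀ * B * V) + Vᵀ * B * V * Z := by rw [hK_skew, add_zero]

end StiefelAlgebra

section NeumannFlow

variable {n r : Type*} [Fintype n] [Fintype r] [DecidableEq r]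

/-- `(X, P)` solves the Neumann system with the Euclidean metric on the Stiefel variety. The second
constraint `XᵀP + PᵀX = 0` is the derivative of the first along `Ẋ = P`, so it is not a field. -/
structure IsNeumannSolution {𝕜 : Type*} [NontriviallyNormedField 𝕜] (A : Matrix n n 𝕜)
    (X P : 𝕜 → Matrix n r 𝕜) : Prop where
  transpose_mul_self (t : 𝕜) : (X t)ᵀ * X t = 1
  hasDerivAt_position (t : 𝕜) : HasDerivAt X (P t) t
  hasDerivAt_momentum (t : 𝕜) : HasDerivAt P (neumannForce A (X t) (P t)) t

namespace IsNeumannSolution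

variable {𝕜 : Type*} [NontriviallyNormedField 𝕜] {A : Matrix n n 𝕜} {X P : 𝕜 → Matrix n r 𝕜}

theorem transpose_mul_add_transpose_mul (h : IsNeumannSolution A X P) (t : 𝕜) :
    (X t)ᵀ * P t + (P t)ᵀ * X t = 0 := by
  have hderiv := hasDerivAt_matrix_mul (hasDerivAt_matrix_transpose (h.hasDerivAt_position t))
    (h.hasDerivAt_position t)
  simp only [h.transpose_mul_self] at hderiv
  rw [add_comm]
  ext i j
  exact (hasDerivAt_matrix_iff.1 hderiv i j).unique (hasDerivAt_const t _)

theorem hasDerivAt_stiefelFrame (h : IsNeumannSolution A X P) (t : 𝕜) :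
    HasDerivAt (fun s => stiefelFrame (X s) (P s)) (stiefelFrameVelocity A (X t) (P t)) t :=
  hasDerivAt_matrix_fromBlocks (h.hasDerivAt_position t) (h.hasDerivAt_momentum t)
    (hasDerivAt_matrix_const t 0) (hasDerivAt_matrix_const t 1)

variable [DecidableEq n]

theorem hasDerivAt_det_gram (h : IsNeumannSolution A X P) (hA : A.IsSymm) {c : 𝕜}
    (hc : IsUnit (c • 1 - A)) (t : 𝕜) :
    HasDerivAt (fun s => ((stiefelFrame (X s) (P s))ᵀ * confocalForm r A c *
      stiefelFrame (X s) (P s)).det) 0 t := by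
  have hgram := hasDerivAt_gram (confocalForm r A c) (h.hasDerivAt_stiefelFrame t)
  rw [gram_velocity_eq hA hc (h.transpose_mul_self t) (h.transpose_mul_add_transpose_mul t)]
    at hgram
  simpa only [trace_transpose, trace_gramGenerator, add_zero, zero_mul] using
    hasDerivAt_det_of_mul_add_mul hgram

theorem det_gram_eq {𝕂 : Type*} [RCLike 𝕂] {A : Matrix n n 𝕂} {X P : 𝕂 → Matrix n r 𝕂}
    (h : IsNeumannSolution A X P) (hA : A.IsSymm) {c : 𝕂} (hc : IsUnit (c • 1 - A)) (s t : 𝕂) :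
    ((stiefelFrame (X s) (P s))ᵀ * confocalForm r A c * stiefelFrame (X s) (P s)).det =
      ((stiefelFrame (X t) (P t))ᵀ * confocalForm r A c * stiefelFrame (X t) (P t)).det :=
  is_const_of_deriv_eq_zero (fun τ => (h.hasDerivAt_det_gram hA hc τ).differentiableAt)
    (fun τ => (h.hasDerivAt_det_gram hA hc τ).deriv) s t

end IsNeumannSolution

theorem generalized_chasles_general [DecidableEq n] {𝕜 : Type*} [RCLike 𝕜] {A : Matrix n n 𝕜}
    {X P : 𝕜 → Matrix n r 𝕜} (h : IsNeumannSolution A X P) (hA : A.IsSymm) {c : 𝕜}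
    (hc : IsUnit (c • 1 - A)) {t₀ : 𝕜}
    (htan : IsTangentToCone (stiefelFrame (X t₀) (P t₀)) (confocalForm r A c)) (t : 𝕜) :
    IsTangentToCone (stiefelFrame (X t) (P t)) (confocalForm r A c) := by
  have htan_iff (s : 𝕜) := isTangentToCone_iff_det_eq_zero
    (stiefelFrame_mulVec_injective (h.transpose_mul_self s) (P s)) (confocalForm r A c)
  rw [htan_iff] at htan ⊢
  rw [h.det_gram_eq hA hc t t₀, htan]

end NeumannFlow

/-- Generalized Chasles theorem: Along the Neumann flow with the Euclidean
metric on the Stiefel variety, if the 2r-plane in ℝ^{n+r} spanned by the columns of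
𝒱(t) = [[X, P],[0, I_r]] is tangent to the confocal cone {wᵀB(c)w = 0},
B(c) = diag(1/(c−a₁),…,1/(c−aₙ),1,…,1), at one time t₀, then it is tangent at all times. -/
theorem generalized_chasles {n r : ℕ} (a : Fin n → ℝ)
    (A : Matrix (Fin n) (Fin n) ℝ) (hA : A = Matrix.diagonal a)
    (X P : ℝ → Matrix (Fin n) (Fin r) ℝ)
    (hc1 : ∀ t, (X t)ᵀ * X t = 1)
    (hc2 : ∀ t, (X t)ᵀ * P t + (P t)ᵀ * X t = 0)
    (hX : ∀ t i j, HasDerivAt (fun s => X s i j) (P t i j) t)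
    (hP : ∀ t i j, HasDerivAt (fun s => P s i j)
      ((-(A * X t) - X t * (P t)ᵀ * P t + X t * (X t)ᵀ * A * X t) i j) t)
    (c : ℝ) (hc : IsUnit (c • (1 : Matrix (Fin n) (Fin n) ℝ) - A))
    (𝒱 : ℝ → Matrix (Fin n ⊕ Fin r) (Fin r ⊕ Fin r) ℝ)
    (h𝒱 : ∀ t, 𝒱 t = Matrix.fromBlocks (X t) (P t) 0 1)
    (Bc : Matrix (Fin n ⊕ Fin r) (Fin n ⊕ Fin r) ℝ)
    (hBc : Bc = Matrix.diagonal (Sum.elim (fun i => 1 / (c - a i)) (fun _ => 1)))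
    (t₀ : ℝ)
    (htan : ∃ v : Fin n ⊕ Fin r → ℝ, v ≠ 0 ∧ (∃ cv : Fin r ⊕ Fin r → ℝ, v = 𝒱 t₀ *ᵥ cv) ∧
      ∀ w : Fin n ⊕ Fin r → ℝ, (∃ d : Fin r ⊕ Fin r → ℝ, w = 𝒱 t₀ *ᵥ d) →
        v ⬝ᵥ (Bc *ᵥ w) = 0) :
    ∀ t : ℝ, ∃ v : Fin n ⊕ Fin r → ℝ, v ≠ 0 ∧ (∃ cv : Fin r ⊕ Fin r → ℝ, v = 𝒱 t *ᵥ cv) ∧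
      ∀ w : Fin n ⊕ Fin r → ℝ, (∃ d : Fin r ⊕ Fin r → ℝ, w = 𝒱 t *ᵥ d) →
        v ⬝ᵥ (Bc *ᵥ w) = 0 := by
  obtain rfl : 𝒱 = fun t => stiefelFrame (X t) (P t) := funext h𝒱
  obtain rfl : Bc = confocalForm (Fin r) A c := by subst hA; rw [hBc, confocalForm_diagonal hc]
  have hsol : IsNeumannSolution A X P :=
    ⟨hc1, fun t => hasDerivAt_matrix_iff.2 (hX t), fun t => hasDerivAt_matrix_iff.2 (hP t)⟩
  exact generalized_chasles_general hsol (hA ▸ isSymm_diagonal a) hc htan
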